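/- arXiv:2003.14302 — 2 statements merged into one kernel-verified Lean document; each statement's English description precedes it below -/
import Mathlib

section
/- Let V be a real vector space, K ⊆ V a convex set, and x ∈ K. Then the affine hull of the face of K generated by x satisfies aff(F_K(x)) = {y ∈ V : ∃ ε > 0 such that x + ε(y − x) ∈ F_K(x) and x − ε(y − x) ∈ F_K(x)} = {y ∈ V : ∃ ε > 0 such that x + ε(y − x) ∈ K and x − ε(y − x) ∈ K}. In particular, x lies in the relative algebraic interior ri(F_K(x)); thus the face generated by any point of an arbitrary convex set has a nonempty relative algebraic interior. -/
variable {V : Type*} [AddCommGroup V] [Module ℝ V]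

/-- `E` is an extreme subset of `K`: whenever a point of `E` is written as
`(1-l)•y + l•z` with `y, z ∈ K` and `l ∈ (0,1)`, both `y` and `z` lie in `E`. -/
def IsExtremeSubset (K E : Set V) : Prop :=
  E ⊆ K ∧ ∀ x ∈ E, ∀ y ∈ K, ∀ z ∈ K, ∀ l : ℝ, l ∈ Set.Ioo (0:ℝ) 1 →
    x = (1 - l) • y + l • z → y ∈ E ∧ z ∈ E

/-- `F` is a face of `K`: a convex extreme subset of `K`. -/
def IsFaceOf (K F : Set V) : Prop := Convex ℝ F ∧ IsExtremeSubset K F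

/-- The face of `K` generated by `x`: the smallest face of `K` containing `x`
(the intersection of all faces of `K` containing `x`). -/
def genFace (K : Set V) (x : V) : Set V := ⋂₀ {F | IsFaceOf K F ∧ x ∈ F}

/-- The relative algebraic interior of `C`: all `x ∈ C` such that for every
`y` in the affine hull of `C` there is `ε > 0` with `x ± ε(y - x) ∈ C`. -/
def riSet (C : Set V) : Set V :=
  {x | x ∈ C ∧ ∀ y ∈ affineSpan ℝ C, ∃ ε : ℝ, 0 < ε ∧
    x + ε • (y - x) ∈ C ∧ x - ε • (y - x) ∈ C}

/-!
The vectors `v` with `x + ε • v ∈ K` for some `ε > 0` form a convex cone, and the directions in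
which one can move from `x` inside `K` both ways form its lineality space `L`. The lineality space
is a face of the cone, hence `K ∩ (x + L)` is a face of `K`; it is the smallest one containing `x`,
because the segment from any of its points to `x` can be prolonged beyond `x` inside `K`. Every
`v ∈ L` is a multiple of a difference of two points of this face, so the affine hull of the face is
`x + L`.
-/

section FeasibleCone

open scoped Pointwise

variable {𝕜 E : Type*} [Field 𝕜] [LinearOrder 𝕜] [IsStrictOrderedRing 𝕜] [AddCommGroup E]
  [Module 𝕜 E] {K : Set E} {x y v : E}

theorem mem_pointedCone_hull_iff_of_convex {s : Set E} (hs : Convex 𝕜 s) (h0 : 0 ∈ s) :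
    v ∈ PointedCone.hull 𝕜 s ↔ ∃ ε : 𝕜, 0 < ε ∧ ε • v ∈ s := by
  constructor
  · intro hv
    have hle : PointedCone.hull 𝕜 s ≤
        (ConvexCone.hull 𝕜 s).toPointedCone (ConvexCone.subset_hull h0) :=
      Submodule.span_le.2 ConvexCone.subset_hull
    obtain ⟨r, hr, w, hw, rfl⟩ := (ConvexCone.mem_hull_of_convex hs).1 (hle hv)
    exact ⟨r⁻¹, inv_pos.2 hr, by simpa only [inv_smul_smul₀ hr.ne'] using hw⟩
  · rintro ⟨ε, hε, hv⟩
    exact (PointedCone.smul_mem_iff _ hε).1 (PointedCone.subset_hull hv)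

variable (𝕜 K x) in
/-- The cone of feasible directions of a convex set `K` at a point `x` of `K`: the directions in
which one can move from `x` a positive distance inside `K`. It is encoded as the cone spanned by
`K - x`, so that no hypothesis on `K` or `x` enters the definition. -/
def feasibleCone : PointedCone 𝕜 E := PointedCone.hull 𝕜 (-x +ᵥ K)

theorem sub_mem_feasibleCone (hy : y ∈ K) : y - x ∈ feasibleCone 𝕜 K x :=
  PointedCone.subset_hull ⟨y, hy, neg_add_eq_sub x y⟩

theorem mem_feasibleCone (hK : Convex 𝕜 K) (hx : x ∈ K) :
    v ∈ feasibleCone 𝕜 K x ↔ ∃ ε : 𝕜, 0 < ε ∧ x + ε • v ∈ K := by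
  have h0 : (0 : E) ∈ -x +ᵥ K := ⟨x, hx, neg_add_cancel x⟩
  simp only [feasibleCone, mem_pointedCone_hull_iff_of_convex (hK.vadd (-x)) h0,
    Set.mem_neg_vadd_set_iff, vadd_eq_add]

theorem starConvex_add_smul_mem_of_le {a b : 𝕜} (hK : StarConvex 𝕜 x K) (hav : x + a • v ∈ K)
    (hb : 0 ≤ b) (hba : b ≤ a) : x + b • v ∈ K := by
  obtain rfl | ha := (hb.trans hba).eq_or_lt
  · rwa [hba.antisymm hb]
  · have h := hK.add_smul_mem hav (div_nonneg hb ha.le) ((div_le_one ha).2 hba)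
    rwa [smul_smul, div_mul_cancel₀ b ha.ne'] at h

theorem mem_lineal_feasibleCone (hK : Convex 𝕜 K) (hx : x ∈ K) :
    v ∈ (feasibleCone 𝕜 K x).lineal ↔ ∃ ε : 𝕜, 0 < ε ∧ x + ε • v ∈ K ∧ x - ε • v ∈ K := by
  simp only [PointedCone.mem_lineal, mem_feasibleCone hK hx, smul_neg, ← sub_eq_add_neg]
  constructor
  · rintro ⟨⟨a, ha, hav⟩, b, hb, hbv⟩
    have hε : 0 < min a b := lt_min ha hb
    have hstar : StarConvex 𝕜 x K := hK.starConvex hx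
    refine ⟨min a b, hε, starConvex_add_smul_mem_of_le hstar hav hε.le (min_le_left a b), ?_⟩
    rw [sub_eq_add_neg, ← smul_neg] at hbv ⊢
    exact starConvex_add_smul_mem_of_le hstar hbv hε.le (min_le_right a b)
  · rintro ⟨ε, hε, hadd, hsub⟩
    exact ⟨⟨ε, hε, hadd⟩, ε, hε, hsub⟩

variable (𝕜 K x) in
theorem isExtreme_inter_mk'_lineal_feasibleCone :
    IsExtreme 𝕜 K (K ∩ AffineSubspace.mk' x (feasibleCone 𝕜 K x).lineal) := by
  refine ⟨Set.inter_subset_left, ?_⟩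
  rintro y hy z hz _ ⟨-, hp⟩ ⟨a, b, ha, hb, hab, rfl⟩
  have hsum : a • (y - x) + b • (z - x) ∈ (feasibleCone 𝕜 K x).lineal := by
    rw [SetLike.mem_coe, AffineSubspace.mem_mk', vsub_eq_sub] at hp
    convert hp using 1
    rw [smul_sub, smul_sub, sub_add_sub_comm, ← add_smul, hab, one_smul]
  exact ⟨hy, (PointedCone.IsFaceOf.lineal _).mem_of_smul_add_smul_mem_left
    (sub_mem_feasibleCone hy) (sub_mem_feasibleCone hz) ha hb hsum⟩

end FeasibleCone

section GenFace

variable {K F : Set V} {x y z v : V}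

theorem isExtremeSubset_iff_isExtreme : IsExtremeSubset K F ↔ IsExtreme ℝ K F := by
  constructor
  · rintro ⟨hsub, hext⟩
    refine ⟨hsub, fun y hy z hz p hp hseg ↦ ?_⟩
    rw [openSegment_eq_image] at hseg
    obtain ⟨l, hl, rfl⟩ := hseg
    exact (hext _ hp y hy z hz l hl rfl).1
  · intro h
    refine ⟨h.subset, fun p hp y hy z hz l hl hpl ↦ ?_⟩
    have hseg : p ∈ openSegment ℝ y z :=
      ⟨1 - l, l, sub_pos.2 hl.2, hl.1, sub_add_cancel 1 l, hpl.symm⟩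
    exact ⟨h.left_mem_of_mem_openSegment hy hz hp hseg,
      h.right_mem_of_mem_openSegment hy hz hp hseg⟩

theorem isFaceOf_inter_mk'_lineal_feasibleCone (hK : Convex ℝ K) (x : V) :
    IsFaceOf K (K ∩ AffineSubspace.mk' x (feasibleCone ℝ K x).lineal) :=
  ⟨hK.inter (AffineSubspace.convex _),
    isExtremeSubset_iff_isExtreme.2 (isExtreme_inter_mk'_lineal_feasibleCone ℝ K x)⟩

theorem self_mem_genFace : x ∈ genFace K x :=
  fun _ hF ↦ hF.2

theorem genFace_subset (hF : IsFaceOf K F) (hx : x ∈ F) : genFace K x ⊆ F :=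
  Set.sInter_subset_of_mem ⟨hF, hx⟩

theorem mem_genFace_of_mem_openSegment (hy : y ∈ K) (hz : z ∈ K) (hx : x ∈ openSegment ℝ y z) :
    y ∈ genFace K x :=
  fun _ hF ↦ (isExtremeSubset_iff_isExtreme.1 hF.1.2).left_mem_of_mem_openSegment hy hz hF.2 hx

theorem genFace_eq_inter_mk'_lineal_feasibleCone (hK : Convex ℝ K) (hx : x ∈ K) :
    genFace K x = K ∩ AffineSubspace.mk' x (feasibleCone ℝ K x).lineal := by
  apply (genFace_subset (isFaceOf_inter_mk'_lineal_feasibleCone hK x)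
    ⟨hx, AffineSubspace.self_mem_mk' _ _⟩).antisymm
  rintro y ⟨hy, hyx⟩
  obtain ⟨ε, hε, hz⟩ := (mem_feasibleCone hK hx).1 (PointedCone.mem_lineal.1 hyx).2
  refine mem_genFace_of_mem_openSegment hy hz (mem_openSegment_iff_div.2 ⟨ε, 1, hε, one_pos, ?_⟩)
  rw [vsub_eq_sub]
  match_scalars <;> field

theorem add_mem_genFace_and_sub_mem_genFace_iff (hK : Convex ℝ K) (hx : x ∈ K) :
    x + v ∈ genFace K x ∧ x - v ∈ genFace K x ↔ x + v ∈ K ∧ x - v ∈ K := by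
  have hsub : genFace K x ⊆ K :=
    genFace_eq_inter_mk'_lineal_feasibleCone hK hx ▸ Set.inter_subset_left
  exact ⟨fun h ↦ ⟨hsub h.1, hsub h.2⟩, fun h ↦
    ⟨mem_genFace_of_mem_openSegment h.1 h.2 (mem_openSegment_add_sub x v),
      mem_genFace_of_mem_openSegment h.2 h.1 (mem_openSegment_sub_add x v)⟩⟩

theorem affineSpan_genFace (hK : Convex ℝ K) (hx : x ∈ K) :
    affineSpan ℝ (genFace K x) = AffineSubspace.mk' x (feasibleCone ℝ K x).lineal := by
  apply le_antisymm
  · rw [affineSpan_le, genFace_eq_inter_mk'_lineal_feasibleCone hK hx]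
    exact Set.inter_subset_right
  · intro y hy
    obtain ⟨ε, hε, hmem⟩ := (mem_lineal_feasibleCone hK hx).1 hy
    have hdir : (x + ε • (y -ᵥ x)) -ᵥ x ∈ (affineSpan ℝ (genFace K x)).direction :=
      AffineSubspace.vsub_mem_direction
        (subset_affineSpan ℝ _ ((add_mem_genFace_and_sub_mem_genFace_iff hK hx).2 hmem).1)
        (subset_affineSpan ℝ _ self_mem_genFace)
    rw [vsub_eq_sub, add_sub_cancel_left, Submodule.smul_mem_iff _ hε.ne'] at hdir
    exact (AffineSubspace.vsub_right_mem_direction_iff_mem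
      (subset_affineSpan ℝ _ self_mem_genFace) y).1 hdir

theorem mem_affineSpan_genFace_iff (hK : Convex ℝ K) (hx : x ∈ K) :
    y ∈ affineSpan ℝ (genFace K x) ↔
      ∃ ε : ℝ, 0 < ε ∧ x + ε • (y - x) ∈ K ∧ x - ε • (y - x) ∈ K := by
  rw [affineSpan_genFace hK hx, AffineSubspace.mem_mk', vsub_eq_sub,
    mem_lineal_feasibleCone hK hx]

end GenFace

theorem stmt3 (K : Set V) (hK : Convex ℝ K) (x : V) (hx : x ∈ K) :
    (affineSpan ℝ (genFace K x) : Set V) =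
      {y : V | ∃ ε : ℝ, 0 < ε ∧
        x + ε • (y - x) ∈ genFace K x ∧ x - ε • (y - x) ∈ genFace K x} ∧
    (affineSpan ℝ (genFace K x) : Set V) =
      {y : V | ∃ ε : ℝ, 0 < ε ∧ x + ε • (y - x) ∈ K ∧ x - ε • (y - x) ∈ K} ∧
    x ∈ riSet (genFace K x) := by
  have hK_iff (y : V) := mem_affineSpan_genFace_iff (y := y) hK hx
  have hface_iff (y : V) : y ∈ affineSpan ℝ (genFace K x) ↔ ∃ ε : ℝ, 0 < ε ∧
      x + ε • (y - x) ∈ genFace K x ∧ x - ε • (y - x) ∈ genFace K x := by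
    simp only [hK_iff, add_mem_genFace_and_sub_mem_genFace_iff hK hx]
  exact ⟨Set.ext hface_iff, Set.ext hK_iff, self_mem_genFace, fun y ↦ (hface_iff y).1⟩
end

section
/- Let V be a real vector space, K ⊆ V a convex set, ℓ ∈ ℕ, u = {1, …, ℓ}, and for each k ∈ u let f_k : K → ℝ ∪ {+∞} be a generalized affine map and α_k ∈ ℝ. Suppose K has no face of dimension belonging to {1, …, ℓ}. Then for every s ⊆ u, every extreme point of the set K_u^s = {x ∈ K : f_k(x) ≤ α_k for all k ∈ u \ s, and f_k(x) = α_k for all k ∈ s} is an extreme point of K. -/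
variable {V : Type*} [AddCommGroup V] [Module ℝ V]

/-- A generalized affine map on `K` with values in `ℝ ∪ {+∞}` (modelled by
`EReal` values that are never `⊥` on `K`), affine with the extended arithmetic
`0·(+∞) = 0`, `λ·(+∞) = +∞` for `λ > 0`, `α + (+∞) = +∞`. -/
def IsGenAffine (K : Set V) (f : V → EReal) : Prop :=
  (∀ x ∈ K, f x ≠ ⊥) ∧
  ∀ x ∈ K, ∀ y ∈ K, ∀ l : ℝ, l ∈ Set.Icc (0:ℝ) 1 →
    f ((1 - l) • x + l • y) = ((1 - l : ℝ) : EReal) * f x + ((l : ℝ) : EReal) * f y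

/-- `x` is an extreme point of `K`, i.e. `{x}` is an extreme subset of `K`. -/
def IsExtremePoint (K : Set V) (x : V) : Prop := IsExtremeSubset K {x}

/-!
Let `D` be the space of directions along which one can move from `x` both ways inside `K`. The face
of `K` generated by `x` is `{y ∈ K | y - x ∈ D}`, so its dimension is at most that of `D`. Near `x`
each `f k` has a constant slope along every direction in `D`. A direction in which all slopes can be
taken to be `0` stays, near `x`, in the set where every `f k` takes the value `f k x`; it is zero if
`x` is an extreme point of that set. Hence `D` has at most as many dimensions as there are maps,
which leaves only dimension `0` for the face generated by `x`.
-/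

section

open Filter Topology

theorem tendsto_mul_const_nhds_zero (c : ℝ) : Tendsto (fun t : ℝ => t * c) (𝓝 0) (𝓝 0) := by
  simpa using (continuous_mul_const c).tendsto 0

theorem exists_pos_of_eventually_add_smul_mem {S : Set V} {x v : V}
    (h : ∀ᶠ t : ℝ in 𝓝 0, x + t • v ∈ S) :
    ∃ ε : ℝ, 0 < ε ∧ x + ε • v ∈ S ∧ x - ε • v ∈ S := by
  have hneg : ∀ᶠ t : ℝ in 𝓝 0, x - t • v ∈ S := by
    simpa [sub_eq_add_neg] using (tendsto_mul_const_nhds_zero (-1)).eventually h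
  obtain ⟨ε, hmem, hε⟩ :=
    (((h.and hneg).filter_mono nhdsWithin_le_nhds).and
      (self_mem_nhdsWithin : Set.Ioi (0 : ℝ) ∈ 𝓝[>] 0)).exists
  exact ⟨ε, hε, hmem⟩

theorem IsExtremePoint.eq_zero_of_eventually_add_smul_mem {S : Set V} {x v : V}
    (hx : IsExtremePoint S x) (h : ∀ᶠ t : ℝ in 𝓝 0, x + t • v ∈ S) : v = 0 := by
  obtain ⟨ε, hε, hadd, hsub⟩ := exists_pos_of_eventually_add_smul_mem h
  have hfix : x + ε • v = x :=
    (hx.2 x rfl _ hadd _ hsub (1 / 2) ⟨by norm_num, by norm_num⟩ (by module)).1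
  exact (smul_eq_zero.1 (add_eq_left.1 hfix)).resolve_left hε.ne'

theorem IsExtremePoint.mono {S T : Set V} {x : V} (hx : IsExtremePoint T x) (hST : S ⊆ T)
    (hxS : x ∈ S) : IsExtremePoint S x :=
  ⟨Set.singleton_subset_iff.2 hxS,
    fun y hy p hp q hq => hx.2 y hy p (hST hp) q (hST hq)⟩

/-- The space of directions along which one can move from `x` both ways while staying in the
convex set `K`; it is the direction of the affine hull of the face generated by `x`. -/
def lineDirections (K : Set V) (hK : Convex ℝ K) (x : V) (hx : x ∈ K) : Submodule ℝ V where
  carrier := {v | ∀ᶠ t : ℝ in 𝓝 0, x + t • v ∈ K}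
  zero_mem' := by simp [hx]
  add_mem' := by
    intro u v hu hv
    filter_upwards [(tendsto_mul_const_nhds_zero 2).eventually hu,
      (tendsto_mul_const_nhds_zero 2).eventually hv] with t htu htv
    convert hK htu htv (a := 1 / 2) (b := 1 / 2) (by norm_num) (by norm_num) (by norm_num)
      using 1
    module
  smul_mem' := by
    intro c v hv
    filter_upwards [(tendsto_mul_const_nhds_zero c).eventually hv] with t ht
    rwa [smul_smul]

section Face

variable {K : Set V} {hK : Convex ℝ K} {x : V} {hx : x ∈ K}

theorem mem_lineDirections {v : V} :
    v ∈ lineDirections K hK x hx ↔ ∀ᶠ t : ℝ in 𝓝 0, x + t • v ∈ K := Iff.rfl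

theorem sub_mem_lineDirections_iff {y : V} (hy : y ∈ K) :
    y - x ∈ lineDirections K hK x hx ↔ ∃ ε : ℝ, 0 < ε ∧ x - ε • (y - x) ∈ K := by
  constructor
  · intro h
    obtain ⟨ε, hε, -, hsub⟩ := exists_pos_of_eventually_add_smul_mem h
    exact ⟨ε, hε, hsub⟩
  · rintro ⟨ε, hε, hz⟩
    have hIcc : Set.Icc (-ε) 1 ⊆ AffineMap.lineMap x y ⁻¹' K :=
      (hK.affine_preimage (AffineMap.lineMap x y)).ordConnected.out
        (by simpa only [Set.mem_preimage, AffineMap.lineMap_apply, vsub_eq_sub, vadd_eq_add,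
          neg_smul, neg_add_eq_sub] using hz)
        (by simpa using hy)
    filter_upwards [Icc_mem_nhds (neg_lt_zero.2 hε) one_pos] with t ht
    simpa [AffineMap.lineMap_apply, add_comm] using hIcc ht

/-- If `y = (1 - l) • p + l • q` and the segment from `y` through `x` extends beyond `x` to
`z ∈ K`, then the segment from `p` through `x` extends to a point between `z` and `q`. -/
theorem sub_mem_lineDirections_of_combo {p q : V} (hp : p ∈ K) (hq : q ∈ K) {l : ℝ}
    (hl : l ∈ Set.Ioo (0 : ℝ) 1) (hpq : (1 - l) • p + l • q ∈ K)
    (h : (1 - l) • p + l • q - x ∈ lineDirections K hK x hx) :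
    p - x ∈ lineDirections K hK x hx := by
  obtain ⟨hl0, hl1⟩ := hl
  obtain ⟨ε, hε, hz⟩ := (sub_mem_lineDirections_iff hpq).1 h
  have : 0 < 1 - l := sub_pos.2 hl1
  refine (sub_mem_lineDirections_iff hp).2
    ⟨ε * (1 - l) / (1 + ε * l), by positivity, ?_⟩
  convert hK hz hq (a := 1 / (1 + ε * l)) (b := ε * l / (1 + ε * l))
    (by positivity) (by positivity) (by field_simp) using 1
  match_scalars <;> field_simp <;> ring

variable (hK hx) in
theorem isFaceOf_setOf_sub_mem_lineDirections :
    IsFaceOf K {y ∈ K | y - x ∈ lineDirections K hK x hx} := by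
  refine ⟨?_, fun y hy => hy.1, ?_⟩
  · convert hK.inter ((lineDirections K hK x hx).convex.translate_preimage_right (-x)) using 1
    ext y
    simp [sub_eq_neg_add]
  · rintro _ ⟨hyK, hyD⟩ p hp q hq l hl rfl
    refine ⟨⟨hp, sub_mem_lineDirections_of_combo hp hq hl hyK hyD⟩,
      hq, sub_mem_lineDirections_of_combo (l := 1 - l) hq hp ?_ ?_ ?_⟩
    · exact ⟨sub_pos.2 hl.2, sub_lt_self _ hl.1⟩
    · simpa [add_comm] using hyK
    · simpa [add_comm] using hyD

variable (hK hx) in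
theorem genFace_eq_setOf_sub_mem_lineDirections :
    genFace K x = {y ∈ K | y - x ∈ lineDirections K hK x hx} := by
  refine Set.Subset.antisymm
    (Set.sInter_subset_of_mem ⟨isFaceOf_setOf_sub_mem_lineDirections hK hx, by simp [hx]⟩) ?_
  rintro y ⟨hy, hyD⟩ F ⟨hF, hxF⟩
  obtain ⟨ε, hε, hz⟩ := (sub_mem_lineDirections_iff hy).1 hyD
  refine (hF.2.2 x hxF y hy _ hz (1 / (1 + ε)) ⟨by positivity, ?_⟩ ?_).1
  · rw [div_lt_one (by positivity)]
    linarith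
  · match_scalars <;> field_simp <;> ring

theorem isFaceOf_genFace (hK : Convex ℝ K) (hx : x ∈ K) : IsFaceOf K (genFace K x) := by
  rw [genFace_eq_setOf_sub_mem_lineDirections hK hx]
  exact isFaceOf_setOf_sub_mem_lineDirections hK hx

theorem mem_genFace_self (K : Set V) (x : V) : x ∈ genFace K x := fun _ hF => hF.2

variable (hK hx) in
theorem vectorSpan_genFace_le_lineDirections :
    vectorSpan ℝ (genFace K x) ≤ lineDirections K hK x hx := by
  rw [vectorSpan_eq_span_vsub_set_right ℝ (mem_genFace_self K x), Submodule.span_le,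
    genFace_eq_setOf_sub_mem_lineDirections hK hx]
  rintro _ ⟨y, hy, rfl⟩
  exact hy.2

theorem isExtremePoint_of_vectorSpan_genFace_eq_bot (hK : Convex ℝ K) (hx : x ∈ K)
    (h : vectorSpan ℝ (genFace K x) = ⊥) : IsExtremePoint K x := by
  have hsub : (genFace K x).Subsingleton := by rwa [vectorSpan_eq_bot_iff_subsingleton] at h
  have heq : genFace K x = {x} := hsub.eq_singleton_of_mem (mem_genFace_self K x)
  have hface := isFaceOf_genFace hK hx
  rw [heq] at hface
  exact hface.2

end Face

/-- `w` is a slope of `f` at `x` in the direction `v`: `f (x + t • v) = f x + t * w` for all `t`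
near `0`. If `f x = ⊤` this says that `f` is `⊤` near `x` on the line, and every `w` is a slope. -/
def IsSlopeAt (f : V → EReal) (x v : V) (w : ℝ) : Prop :=
  ∀ᶠ t : ℝ in 𝓝 0, f (x + t • v) = f x + ((t * w : ℝ) : EReal)

theorem IsSlopeAt.smul {f : V → EReal} {x v : V} {w : ℝ} (h : IsSlopeAt f x v w) (c : ℝ) :
    IsSlopeAt f x (c • v) (c * w) := by
  filter_upwards [(tendsto_mul_const_nhds_zero c).eventually h] with t ht
  rw [smul_smul, ht, mul_assoc]

theorem ereal_combo_add_coe {a : EReal} (ha : a ≠ ⊥) {l : ℝ} (hl : l ∈ Set.Ioo (0 : ℝ) 1)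
    (b c : ℝ) :
    ((1 - l : ℝ) : EReal) * (a + b) + (l : EReal) * (a + c) =
      a + (((1 - l) * b + l * c : ℝ) : EReal) := by
  induction a with
  | bot => exact absurd rfl ha
  | top =>
    rw [EReal.top_add_coe, EReal.top_add_coe, EReal.top_add_coe,
      EReal.coe_mul_top_of_pos (sub_pos.2 hl.2), EReal.coe_mul_top_of_pos hl.1,
      EReal.top_add_top]
  | coe a => norm_cast; ring

namespace IsGenAffine

variable {K : Set V} {f : V → EReal} {x : V}

theorem isSlopeAt_add {u v : V} {w z : ℝ} (hf : IsGenAffine K f) (hx : x ∈ K)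
    (hu : ∀ᶠ t : ℝ in 𝓝 0, x + t • u ∈ K) (hv : ∀ᶠ t : ℝ in 𝓝 0, x + t • v ∈ K)
    (hw : IsSlopeAt f x u w) (hz : IsSlopeAt f x v z) : IsSlopeAt f x (u + v) (w + z) := by
  have h2 := tendsto_mul_const_nhds_zero 2
  filter_upwards [h2.eventually hu, h2.eventually hv, h2.eventually hw, h2.eventually hz]
    with t htu htv htw htz
  have hmid : x + t • (u + v) =
      (1 - 1 / 2 : ℝ) • (x + (t * 2) • u) + (1 / 2 : ℝ) • (x + (t * 2) • v) := by module
  rw [hmid, hf.2 _ htu _ htv (1 / 2) ⟨by norm_num, by norm_num⟩, htw, htz,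
    ereal_combo_add_coe (hf.1 x hx) ⟨by norm_num, by norm_num⟩]
  congr 2
  ring

theorem combo_eq_top {p q : V} {l : ℝ} (hf : IsGenAffine K f) (hp : p ∈ K) (hq : q ∈ K)
    (hl : l ∈ Set.Ioo (0 : ℝ) 1) (h : f p = ⊤ ∨ f q = ⊤) : f ((1 - l) • p + l • q) = ⊤ := by
  have ne_bot {c : ℝ} (hc : 0 < c) {a : EReal} (ha : a ≠ ⊥) : (c : EReal) * a ≠ ⊥ := by
    simp [EReal.mul_eq_bot, ha, hc.not_gt]
  have hl' : 0 < 1 - l := sub_pos.2 hl.2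
  rw [hf.2 p hp q hq l ⟨hl.1.le, hl.2.le⟩]
  rcases h with h | h
  · rw [h, EReal.coe_mul_top_of_pos hl', EReal.top_add_of_ne_bot (ne_bot hl.1 (hf.1 q hq))]
  · rw [h, EReal.coe_mul_top_of_pos hl.1, EReal.add_top_of_ne_bot (ne_bot hl' (hf.1 p hp))]

theorem exists_isSlopeAt {v : V} (hf : IsGenAffine K f)
    (hv : ∀ᶠ t : ℝ in 𝓝 0, x + t • v ∈ K) : ∃ w : ℝ, IsSlopeAt f x v w := by
  obtain ⟨ε, hε, hq, hp⟩ := exists_pos_of_eventually_add_smul_mem hv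
  have hcombo (t : ℝ) : x + t • v =
      (1 - (1 + t / ε) / 2) • (x - ε • v) + ((1 + t / ε) / 2) • (x + ε • v) := by
    match_scalars <;> field_simp <;> ring
  have hIoo : ∀ᶠ t : ℝ in 𝓝 0, (1 + t / ε) / 2 ∈ Set.Ioo (0 : ℝ) 1 :=
    ContinuousAt.eventually_mem (by fun_prop) (Ioo_mem_nhds (by norm_num) (by norm_num))
  by_cases htop : f (x - ε • v) = ⊤ ∨ f (x + ε • v) = ⊤
  · have hline : ∀ᶠ t : ℝ in 𝓝 0, f (x + t • v) = ⊤ := by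
      filter_upwards [hIoo] with t ht
      rw [hcombo]
      exact hf.combo_eq_top hp hq ht htop
    have hx : f x = ⊤ := by simpa using hline.self_of_nhds
    exact ⟨0, hline.mono fun t ht => by simp [ht, hx]⟩
  · push Not at htop
    lift f (x - ε • v) to ℝ using ⟨htop.1, hf.1 _ hp⟩ with P hP
    lift f (x + ε • v) to ℝ using ⟨htop.2, hf.1 _ hq⟩ with Q hQ
    have hline : ∀ᶠ t : ℝ in 𝓝 0,
        f (x + t • v) = (((P + Q) / 2 + t * ((Q - P) / (2 * ε)) : ℝ) : EReal) := by
      filter_upwards [hIoo] with t ht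
      rw [hcombo, hf.2 _ hp _ hq _ ⟨ht.1.le, ht.2.le⟩, ← hP, ← hQ]
      norm_cast
      field_simp
      ring
    have hx : f x = (((P + Q) / 2 : ℝ) : EReal) := by simpa using hline.self_of_nhds
    exact ⟨(Q - P) / (2 * ε), hline.mono fun t ht => by rw [ht, hx, EReal.coe_add]⟩

end IsGenAffine

section SlopeGraph

variable {K : Set V} {ι : Type*} {f : ι → V → EReal} {x : V}

/-- The linear relation between directions `v` at `x` and families `w` of slopes of the `f k` in
the direction `v`. It is only a relation, as slopes are not unique where `f k x = ⊤`. -/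
def slopeGraph (hK : Convex ℝ K) (hf : ∀ k, IsGenAffine K (f k)) (hx : x ∈ K) :
    Submodule ℝ (V × (ι → ℝ)) where
  carrier := {p | p.1 ∈ lineDirections K hK x hx ∧ ∀ k, IsSlopeAt (f k) x p.1 (p.2 k)}
  zero_mem' := ⟨zero_mem _, fun k => by simp [IsSlopeAt]⟩
  add_mem' hp hq :=
    ⟨add_mem hp.1 hq.1, fun k => (hf k).isSlopeAt_add hx hp.1 hq.1 (hp.2 k) (hq.2 k)⟩
  smul_mem' c _ hp := ⟨Submodule.smul_mem _ c hp.1, fun k => (hp.2 k).smul c⟩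

theorem map_fst_slopeGraph (hK : Convex ℝ K) (hf : ∀ k, IsGenAffine K (f k)) (hx : x ∈ K) :
    (slopeGraph hK hf hx).map (LinearMap.fst ℝ V (ι → ℝ)) = lineDirections K hK x hx := by
  refine le_antisymm ?_ fun v hv => ?_
  · rintro _ ⟨p, hp, rfl⟩
    exact hp.1
  · choose w hw using fun k => (hf k).exists_isSlopeAt (mem_lineDirections.1 hv)
    exact ⟨(v, w), ⟨hv, hw⟩, rfl⟩

variable [Finite ι]

theorem injective_snd_slopeGraph (hK : Convex ℝ K) (hf : ∀ k, IsGenAffine K (f k)) (hx : x ∈ K)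
    (hext : IsExtremePoint {y ∈ K | ∀ k, f k y = f k x} x) :
    Function.Injective ((LinearMap.snd ℝ V (ι → ℝ)).domRestrict (slopeGraph hK hf hx)) := by
  rw [← LinearMap.ker_eq_bot, LinearMap.ker_eq_bot']
  rintro ⟨⟨v, w⟩, hv, hw⟩ (rfl : w = 0)
  have hmem : ∀ᶠ t : ℝ in 𝓝 0, x + t • v ∈ {y ∈ K | ∀ k, f k y = f k x} := by
    filter_upwards [mem_lineDirections.1 hv, eventually_all.2 hw] with t htK htf
    exact ⟨htK, fun k => by simpa using htf k⟩
  simp [hext.eq_zero_of_eventually_add_smul_mem hmem]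

end SlopeGraph

theorem rank_lineDirections_le_card {K : Set V} {ι : Type*} [Fintype ι] {f : ι → V → EReal}
    {x : V} (hK : Convex ℝ K) (hf : ∀ k, IsGenAffine K (f k)) (hx : x ∈ K)
    (hext : IsExtremePoint {y ∈ K | ∀ k, f k y = f k x} x) :
    Module.rank ℝ (lineDirections K hK x hx) ≤ (Fintype.card ι : Cardinal) := by
  have hgraph := LinearMap.lift_rank_le_of_injective _ (injective_snd_slopeGraph hK hf hx hext)
  have hmap := lift_rank_map_le (LinearMap.fst ℝ V (ι → ℝ)) (slopeGraph hK hf hx)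
  rw [map_fst_slopeGraph] at hmap
  rw [rank_fun', Cardinal.lift_natCast, Cardinal.lift_le_nat_iff] at hgraph
  simpa using hmap.trans (Cardinal.lift_le.2 hgraph)

end

theorem stmt14_general {K : Set V} (hK : Convex ℝ K) {ι : Type*} [Fintype ι]
    {f : ι → V → EReal} (hf : ∀ k, IsGenAffine K (f k))
    (hKfaces : ∀ F : Set V, IsFaceOf K F → ∀ d : ℕ, 1 ≤ d → d ≤ Fintype.card ι →
      Module.rank ℝ ↥(vectorSpan ℝ F) ≠ (d : Cardinal))
    {x : V} (hext : IsExtremePoint {y ∈ K | ∀ k, f k y = f k x} x) :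
    IsExtremePoint K x := by
  have hx : x ∈ K := (hext.1 rfl).1
  have hrank : Module.rank ℝ (vectorSpan ℝ (genFace K x)) ≤ (Fintype.card ι : Cardinal) :=
    (Submodule.rank_mono (vectorSpan_genFace_le_lineDirections hK hx)).trans
      (rank_lineDirections_le_card hK hf hx hext)
  obtain ⟨d, hd⟩ := Cardinal.lt_aleph0.1 (hrank.trans_lt Cardinal.natCast_lt_aleph0)
  have hd_le : d ≤ Fintype.card ι := by exact_mod_cast hd ▸ hrank
  have hd_zero : d = 0 := by
    by_contra hne
    exact hKfaces _ (isFaceOf_genFace hK hx) d (Nat.one_le_iff_ne_zero.2 hne) hd_le hd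
  refine isExtremePoint_of_vectorSpan_genFace_eq_bot hK hx (Submodule.rank_eq_zero.1 ?_)
  rw [hd, hd_zero, Nat.cast_zero]

theorem stmt14 (K : Set V) (hK : Convex ℝ K) (ℓ : ℕ)
    (f : Fin ℓ → V → EReal) (hf : ∀ k, IsGenAffine K (f k))
    (α : Fin ℓ → ℝ)
    (hKfaces : ∀ F : Set V, IsFaceOf K F → ∀ d : ℕ, 1 ≤ d → d ≤ ℓ →
      Module.rank ℝ ↥(vectorSpan ℝ F) ≠ (d : Cardinal)) :
    ∀ s : Set (Fin ℓ), ∀ x : V,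
      IsExtremePoint {y ∈ K | (∀ k ∉ s, f k y ≤ (α k : EReal)) ∧
                              (∀ k ∈ s, f k y = (α k : EReal))} x →
      IsExtremePoint K x := by
  intro s x hx
  refine stmt14_general hK hf (by simpa using hKfaces) (hx.mono ?_ ⟨(hx.1 rfl).1, fun _ => rfl⟩)
  exact fun y ⟨hy, hfy⟩ => ⟨hy, by simpa only [hfy] using (hx.1 rfl).2⟩
end
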